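/- arXiv:2211.15922 — 2 statements merged into one kernel-verified Lean document; each statement's English description precedes it below -/
import Mathlib

section
/- Let L be a residuated lattice, E_L the disjoint union over P ∈ Spec(L) of the quotients L/O(P), equipped with the topology T(B) generated by the base B = {D(F, a) : F a filter of L, a ∈ L}, where D(F, a) = {a_P : P ∈ D(F)}, and let π : E_L → Spec(L) be the canonical projection a_P ↦ P. Equip E_L △ E_L = {(u, v) ∈ E_L × E_L : π(u) = π(v)} with the subspace topology of the product topology. Then the function E_L △ E_L → E_L sending (a_P, b_P) to (a ⊗ b)_P is well defined and continuous, and the same holds for the operations induced by ∧, ∨ and →. -/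
/-- A residuated lattice: a bounded lattice with a commutative monoid
operation `mul` whose identity is the top element, and a residuum `himp`
satisfying `mul x y ≤ z ↔ x ≤ himp y z`. Here `⊤` plays the role of `1`
and `⊥` the role of `0`. -/
class ResiduatedLattice (L : Type*) extends Lattice L, BoundedOrder L where
  mul : L → L → L
  himp : L → L → L
  mul_comm : ∀ x y : L, mul x y = mul y x
  mul_assoc : ∀ x y z : L, mul (mul x y) z = mul x (mul y z)
  mul_top : ∀ x : L, mul x ⊤ = x
  residuation : ∀ x y z : L, mul x y ≤ z ↔ x ≤ himp y z

namespace ResiduatedLattice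

variable {L : Type*} [ResiduatedLattice L]

/-- A filter of a residuated lattice: a nonempty, upward closed subset
closed under `mul`. -/
def IsFilter (F : Set L) : Prop :=
  F.Nonempty ∧ (∀ x y : L, x ∈ F → x ≤ y → y ∈ F) ∧
    ∀ x y : L, x ∈ F → y ∈ F → mul x y ∈ F

/-- A prime filter: a proper filter such that `x ⊔ y ∈ P` implies
`x ∈ P` or `y ∈ P`. -/
def IsPrimeFilter (P : Set L) : Prop :=
  IsFilter P ∧ P ≠ Set.univ ∧ ∀ x y : L, x ⊔ y ∈ P → x ∈ P ∨ y ∈ P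

/-- `filterGen X` is the smallest filter containing `X`. -/
def filterGen (X : Set L) : Set L := ⋂₀ {F : Set L | IsFilter F ∧ X ⊆ F}

/-- The prime spectrum: the set of all prime filters. -/
def Spectrum (L : Type*) [ResiduatedLattice L] := {P : Set L // IsPrimeFilter P}

/-- `D X = {P ∈ Spec L | X ⊄ P}`. -/
def D (X : Set L) : Set (Spectrum L) := {P : Spectrum L | ¬ X ⊆ P.1}

/-- `O P = {x | a ⊔ x = 1 for some a ∉ P}`. -/
def O (P : Set L) : Set L := {x : L | ∃ a ∉ P, a ⊔ x = ⊤}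

/-- The congruence relation associated to a filter `F`:
`x ≡_F y` iff `(x → y) ⊗ (y → x) ∈ F`. -/
def rel (F : Set L) (x y : L) : Prop := mul (himp x y) (himp y x) ∈ F

end ResiduatedLattice

namespace ResiduatedLattice

variable {L : Type*} [ResiduatedLattice L]

/-- The family of sets of the form `D X`, the open sets of the Stone topology. -/
def stoneOpens (L : Type*) [ResiduatedLattice L] : Set (Set (Spectrum L)) :=
  {U : Set (Spectrum L) | ∃ X : Set L, U = D X}

/-- The Stone topology on `Spec(L)`, whose open sets are exactly the `D X`. -/
instance : TopologicalSpace (Spectrum L) :=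
  TopologicalSpace.generateFrom (stoneOpens L)

/-- The total space `E_L`: the disjoint union over `P ∈ Spec(L)` of the
quotients `L/O(P)` (quotient by the relation `x ≡ y` iff
`(x → y) ⊗ (y → x) ∈ O(P)`). -/
def EL (L : Type*) [ResiduatedLattice L] :=
  (P : Spectrum L) × Quot (rel (O P.1))

/-- `a_P`, the class of `a` in the stalk `L/O(P)`, viewed in `E_L`. -/
def stalkMk (P : Spectrum L) (a : L) : EL L := ⟨P, Quot.mk _ a⟩

/-- The canonical projection `π : E_L → Spec(L)`, `a_P ↦ P`. -/
def proj (L : Type*) [ResiduatedLattice L] : EL L → Spectrum L := fun e => e.1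

/-- `D(F, a) = {a_P : P ∈ D(F)}`. -/
def DFa (F : Set L) (a : L) : Set (EL L) :=
  {e : EL L | ∃ P ∈ D F, e = stalkMk P a}

/-- The base `B = {D(F, a) : F a filter of L, a ∈ L}` for the topology on `E_L`. -/
def ELBase (L : Type*) [ResiduatedLattice L] : Set (Set (EL L)) :=
  {S : Set (EL L) | ∃ (F : Set L) (a : L), IsFilter F ∧ S = DFa F a}

/-- The topology `T(B)` on `E_L` generated by the base `B`. -/
instance : TopologicalSpace (EL L) :=
  TopologicalSpace.generateFrom (ELBase L)

end ResiduatedLattice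

namespace ResiduatedLattice

/-- `E_L △ E_L = {(u, v) ∈ E_L × E_L : π(u) = π(v)}` with the subspace
topology of the product topology. -/
abbrev EDelta (L : Type*) [ResiduatedLattice L] :=
  {uv : EL L × EL L // proj L uv.1 = proj L uv.2}

section helpers
variable {L : Type*} [ResiduatedLattice L]

instance instCommMul : Std.Commutative (mul : L → L → L) := ⟨mul_comm⟩
instance instAssocMul : Std.Associative (mul : L → L → L) := ⟨mul_assoc⟩

theorem mul_mono_l {x y : L} (z : L) (h : x ≤ y) : mul x z ≤ mul y z :=
  (residuation x z _).2 (h.trans ((residuation y z _).1 le_rfl))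

theorem mul_mono_r {x y : L} (z : L) (h : x ≤ y) : mul z x ≤ mul z y := by
  rw [mul_comm z x, mul_comm z y]; exact mul_mono_l z h

theorem mul_mono2 {x y z w : L} (h : x ≤ y) (h' : z ≤ w) : mul x z ≤ mul y w :=
  (mul_mono_l z h).trans (mul_mono_r y h')

theorem mul_le_l (x y : L) : mul x y ≤ x := by
  have := mul_mono_r x (le_top : y ≤ ⊤)
  rwa [mul_top] at this

theorem mul_le_r (x y : L) : mul x y ≤ y := by
  rw [mul_comm]; exact mul_le_l y x

theorem himp_mul_le (x y : L) : mul (himp x y) x ≤ y := (residuation _ _ _).2 le_rfl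

theorem mul_sup_le {z x y w : L} (h : mul z x ≤ w) (h' : mul z y ≤ w) :
    mul z (x ⊔ y) ≤ w := by
  rw [mul_comm] at h h' ⊢
  rw [residuation] at h h' ⊢
  exact sup_le h h'

theorem top_mem {F : Set L} (hF : IsFilter F) : ⊤ ∈ F := by
  obtain ⟨x, hx⟩ := hF.1
  exact hF.2.1 x _ hx le_top

theorem isFilter_filterGen (X : Set L) : IsFilter (filterGen X) := by
  refine ⟨⟨⊤, fun F hF => top_mem hF.1⟩, fun x y hx hxy F hF => hF.1.2.1 x y (hx F hF) hxy,
    fun x y hx hy F hF => hF.1.2.2 x y (hx F hF) (hy F hF)⟩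

theorem mem_D_filterGen (w : L) (P : Spectrum L) : P ∈ D (filterGen {w}) ↔ w ∉ P.1 := by
  constructor
  · intro h hw
    exact h fun x hx => hx P.1 ⟨P.2.1, by simpa using hw⟩
  · intro hw h
    exact hw (h fun F hF => hF.2 rfl)

theorem isFilter_O (P : Spectrum L) : IsFilter (O P.1) := by
  refine ⟨?_, ?_, ?_⟩
  · obtain ⟨a, ha⟩ := (Set.ne_univ_iff_exists_notMem _).1 P.2.2.1
    exact ⟨⊤, a, ha, by simp⟩
  · rintro x y ⟨a, ha, h⟩ hxy
    exact ⟨a, ha, top_le_iff.1 (h ▸ sup_le_sup_left hxy a)⟩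
  · rintro x y ⟨a, ha, h⟩ ⟨b, hb, h'⟩
    refine ⟨a ⊔ b, fun hab => (P.2.2.2 a b hab).elim ha hb, top_le_iff.1 ?_⟩
    have e : mul (a ⊔ x) (b ⊔ y) = ⊤ := by rw [h, h', mul_top]
    rw [← e]
    refine mul_sup_le ((mul_le_r _ _).trans (le_sup_right.trans le_sup_left)) ?_
    rw [mul_comm]
    refine mul_sup_le ((mul_le_r _ _).trans (le_sup_left.trans le_sup_left)) ?_
    rw [mul_comm]
    exact le_sup_right

theorem rel_iff {F : Set L} (hF : IsFilter F) (x y : L) :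
    rel F x y ↔ ∃ z ∈ F, mul z x ≤ y ∧ mul z y ≤ x := by
  constructor
  · intro h
    exact ⟨_, h, (residuation _ _ _).2 (mul_le_l _ _), (residuation _ _ _).2 (mul_le_r _ _)⟩
  · rintro ⟨z, hz, h, h'⟩
    exact hF.2.1 _ _ (hF.2.2 z z hz hz)
      (mul_mono2 ((residuation _ _ _).1 h) ((residuation _ _ _).1 h'))

theorem rel_equiv {F : Set L} (hF : IsFilter F) : Equivalence (rel F) := by
  refine ⟨fun x => ?_, fun {x y} h => ?_, fun {x y z} h h' => ?_⟩
  · exact (rel_iff hF _ _).2 ⟨⊤, top_mem hF, mul_le_r _ _, mul_le_r _ _⟩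
  · obtain ⟨z, hz, h1, h2⟩ := (rel_iff hF _ _).1 h
    exact (rel_iff hF _ _).2 ⟨z, hz, h2, h1⟩
  · obtain ⟨u, hu, h1, h2⟩ := (rel_iff hF _ _).1 h
    obtain ⟨v, hv, h3, h4⟩ := (rel_iff hF _ _).1 h'
    refine (rel_iff hF _ _).2 ⟨mul u v, hF.2.2 _ _ hu hv, ?_, ?_⟩
    · have e : mul (mul u v) x = mul v (mul u x) := by ac_rfl
      rw [e]; exact (mul_mono_r v h1).trans h3
    · rw [mul_assoc]; exact (mul_mono_r u h4).trans h2

theorem stalkMk_eq_iff (P : Spectrum L) (a b : L) :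
    stalkMk P a = stalkMk P b ↔ rel (O P.1) a b := by
  constructor
  · intro h
    have h2 : Quot.mk (rel (O P.1)) a = Quot.mk (rel (O P.1)) b := by
      unfold stalkMk at h
      exact eq_of_heq (Sigma.mk.inj h).2
    have := Quot.eqvGen_exact h2
    rwa [(rel_equiv (isFilter_O P)).eqvGen_iff] at this
  · intro h
    unfold stalkMk
    rw [Quot.sound h]

/-- Compatibility of a binary operation with the congruences. -/
def Compat (op : L → L → L) : Prop :=
  ∀ z z' x x' y y' : L, mul z x ≤ y → mul z y ≤ x → mul z' x' ≤ y' → mul z' y' ≤ x' →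
    mul (mul z z') (op x x') ≤ op y y'

theorem Compat.rel {op : L → L → L} (h : Compat op) {F : Set L} (hF : IsFilter F)
    {x x' y y' : L} (hr : rel F x y) (hs : rel F x' y') : rel F (op x x') (op y y') := by
  obtain ⟨u, hu, h1, h2⟩ := (rel_iff hF _ _).1 hr
  obtain ⟨v, hv, h3, h4⟩ := (rel_iff hF _ _).1 hs
  exact (rel_iff hF _ _).2 ⟨mul u v, hF.2.2 _ _ hu hv, h _ _ _ _ _ _ h1 h2 h3 h4,
    h _ _ _ _ _ _ h2 h1 h4 h3⟩

theorem isOpen_DFa {F : Set L} (hF : IsFilter F) (a : L) : IsOpen (DFa F a) :=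
  TopologicalSpace.isOpen_generateFrom_of_mem ⟨F, a, hF, rfl⟩

theorem exists_op {op : L → L → L} (h : Compat op) :
    ∃ f : EDelta L → EL L, Continuous f ∧
        ∀ (P : Spectrum L) (a b : L),
          f ⟨(stalkMk P a, stalkMk P b), rfl⟩ = stalkMk P (op a b) := by
  let f : EDelta L → EL L := fun uv => stalkMk uv.1.1.1 (op uv.1.1.2.out uv.1.2.2.out)
  have hf : ∀ (P : Spectrum L) (a b : L),
      f ⟨(stalkMk P a, stalkMk P b), rfl⟩ = stalkMk P (op a b) := by
    intro P a b
    have key : ∀ c : L, rel (O P.1) (Quot.out (Quot.mk (rel (O P.1)) c)) c := by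
      intro c
      rw [← stalkMk_eq_iff]
      unfold stalkMk
      rw [Quot.out_eq]
    exact (stalkMk_eq_iff P _ _).2 (h.rel (isFilter_O P) (key a) (key b))
  refine ⟨f, continuous_generateFrom_iff.2 ?_, hf⟩
  rintro _ ⟨F, c, hF, rfl⟩
  rw [isOpen_iff_forall_mem_open]
  rintro ⟨⟨⟨P, qa⟩, ⟨P', qb⟩⟩, hP⟩ hmem
  obtain rfl : P = P' := hP
  induction qa using Quot.ind with | _ a
  induction qb using Quot.ind with | _ b
  obtain ⟨Q, hQ, he⟩ := hmem
  have he : stalkMk P (op a b) = stalkMk Q c := (hf P a b).symm.trans he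
  obtain rfl : P = Q := congrArg (proj L) he
  obtain ⟨w, hw, hwz⟩ := (stalkMk_eq_iff _ _ _).1 he
  have hG := isFilter_filterGen ({w} : Set L)
  have hPG := (mem_D_filterGen w P).2 hw
  refine ⟨Subtype.val ⁻¹' ((DFa F a ∩ DFa (filterGen {w}) a) ×ˢ DFa (filterGen {w}) b), ?_,
    (((isOpen_DFa hF a).inter (isOpen_DFa hG a)).prod (isOpen_DFa hG b)).preimage
      continuous_subtype_val, ⟨⟨P, hQ, rfl⟩, ⟨P, hPG, rfl⟩⟩, ⟨P, hPG, rfl⟩⟩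
  rintro ⟨⟨u, v⟩, huv⟩ ⟨⟨⟨Q, hQF, h1⟩, ⟨Q', hQG, h2⟩⟩, ⟨Q'', -, h3⟩⟩
  dsimp only at h1 h2 h3
  subst h1 h3
  obtain rfl : Q = Q' := congrArg (proj L) h2
  obtain rfl : Q = Q'' := huv
  exact ⟨Q, hQF, (hf Q a b).trans
    ((stalkMk_eq_iff _ _ _).2 ⟨w, (mem_D_filterGen w Q).1 hQG, hwz⟩)⟩

theorem compat_mul : Compat (mul : L → L → L) := by
  intro z z' x x' y y' h1 _ h3 _
  have e : mul (mul z z') (mul x x') = mul (mul z x) (mul z' x') := by ac_rfl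
  rw [e]; exact mul_mono2 h1 h3

theorem compat_inf : Compat (fun x y : L => x ⊓ y) := by
  intro z z' x x' y y' h1 _ h3 _
  exact le_inf ((mul_mono2 (mul_le_l _ _) inf_le_left).trans h1)
    ((mul_mono2 (mul_le_r _ _) inf_le_right).trans h3)

theorem compat_sup : Compat (fun x y : L => x ⊔ y) := by
  intro z z' x x' y y' h1 _ h3 _
  exact mul_sup_le (((mul_mono_l _ (mul_le_l _ _)).trans h1).trans le_sup_left)
    (((mul_mono_l _ (mul_le_r _ _)).trans h3).trans le_sup_right)

theorem compat_himp : Compat (himp : L → L → L) := by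
  intro z z' x x' y y' _ h2 h3 _
  rw [← residuation]
  have e : mul (mul (mul z z') (himp x x')) y = mul z' (mul (himp x x') (mul z y)) := by ac_rfl
  rw [e]
  exact (mul_mono_r _ ((mul_mono_r _ h2).trans (himp_mul_le _ _))).trans h3

end helpers

/-- the maps `(a_P, b_P) ↦ (a ⊗ b)_P`, `(a_P, b_P) ↦ (a ∧ b)_P`,
`(a_P, b_P) ↦ (a ∨ b)_P` and `(a_P, b_P) ↦ (a → b)_P` are well defined and
continuous from `E_L △ E_L` to `E_L`. -/
theorem stalk_ops_continuous (L : Type*) [ResiduatedLattice L] :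
    (∃ f : EDelta L → EL L, Continuous f ∧
        ∀ (P : Spectrum L) (a b : L),
          f ⟨(stalkMk P a, stalkMk P b), rfl⟩ = stalkMk P (mul a b)) ∧
      (∃ f : EDelta L → EL L, Continuous f ∧
        ∀ (P : Spectrum L) (a b : L),
          f ⟨(stalkMk P a, stalkMk P b), rfl⟩ = stalkMk P (a ⊓ b)) ∧
      (∃ f : EDelta L → EL L, Continuous f ∧
        ∀ (P : Spectrum L) (a b : L),
          f ⟨(stalkMk P a, stalkMk P b), rfl⟩ = stalkMk P (a ⊔ b)) ∧
      (∃ f : EDelta L → EL L, Continuous f ∧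
        ∀ (P : Spectrum L) (a b : L),
          f ⟨(stalkMk P a, stalkMk P b), rfl⟩ = stalkMk P (himp a b)) :=
  ⟨exists_op compat_mul, exists_op compat_inf, exists_op compat_sup, exists_op compat_himp⟩

end ResiduatedLattice
end

section
/- Let L be a residuated lattice. Then ⋂ {O(P) : P ∈ Spec(L)} = {1}, where O(P) = {x ∈ L : a ∨ x = 1 for some a ∈ L − P}. -/
namespace ResiduatedLattice

theorem aux_mul_le_left {L : Type*} [ResiduatedLattice L] (x y : L) : mul x y ≤ y := by
  have h : x ≤ himp y y := by
    refine le_trans le_top ((residuation ⊤ y y).1 ?_)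
    rw [mul_comm, mul_top]
  exact (residuation x y y).2 h

theorem aux_sup_mul {L : Type*} [ResiduatedLattice L] (a z w : L) :
    mul (z ⊔ a) (w ⊔ a) ≤ mul z w ⊔ a := by
  rw [residuation]
  refine sup_le ?_ ?_
  · rw [← residuation, mul_comm, residuation]
    refine sup_le ?_ ?_
    · rw [← residuation, mul_comm]
      exact le_sup_left
    · rw [← residuation, mul_comm]
      exact le_trans (aux_mul_le_left z a) le_sup_right
  · rw [← residuation, mul_comm]
    exact le_trans (aux_mul_le_left _ a) le_sup_right

theorem aux_colon {L : Type*} [ResiduatedLattice L] {F : Set L} (hF : IsFilter F) (a : L) :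
    IsFilter {z : L | z ⊔ a ∈ F} := by
  obtain ⟨⟨f, hf⟩, hup, hmul⟩ := hF
  refine ⟨⟨f, hup _ _ hf le_sup_left⟩, ?_, ?_⟩
  · intro x y hx hxy
    exact hup _ _ hx (sup_le_sup_right hxy a)
  · intro x y hx hy
    exact hup _ _ (hmul _ _ hx hy) (aux_sup_mul a x y)

theorem aux_exists_prime {L : Type*} [ResiduatedLattice L] (x : L) (hx : x ≠ ⊤) :
    ∃ P : Set L, IsPrimeFilter P ∧ x ∉ P := by
  have hbase : ({⊤} : Set L) ∈ {F : Set L | IsFilter F ∧ x ∉ F} := by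
    refine ⟨⟨⟨⊤, rfl⟩, ?_, ?_⟩, hx⟩
    · rintro a b rfl hb
      exact top_le_iff.1 hb
    · rintro a b rfl rfl
      exact mul_top _
  obtain ⟨F, -, hmax⟩ := zorn_subset_nonempty {F : Set L | IsFilter F ∧ x ∉ F} (by
    intro c hc hchain hne
    refine ⟨⋃₀ c, ⟨⟨?_, ?_, ?_⟩, ?_⟩, fun s hs => Set.subset_sUnion_of_mem hs⟩
    · obtain ⟨G, hG⟩ := hne
      obtain ⟨g, hg⟩ := (hc hG).1.1
      exact ⟨g, G, hG, hg⟩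
    · rintro a b ⟨G, hG, ha⟩ hab
      exact ⟨G, hG, (hc hG).1.2.1 a b ha hab⟩
    · rintro a b ⟨G, hG, ha⟩ ⟨H, hH, hb⟩
      rcases hchain.total hG hH with h | h
      · exact ⟨H, hH, (hc hH).1.2.2 a b (h ha) hb⟩
      · exact ⟨G, hG, (hc hG).1.2.2 a b ha (h hb)⟩
    · rintro ⟨G, hG, h⟩
      exact (hc hG).2 h) _ hbase
  obtain ⟨hF, hxF⟩ := hmax.prop
  have key : ∀ a b : L, a ⊔ b ∈ F → a ∉ F → x ⊔ b ∈ F := by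
    intro a b hab ha
    by_contra hxb
    have hsub : F ⊆ {z : L | z ⊔ b ∈ F} := fun z hz => hF.2.1 _ _ hz le_sup_left
    exact ha (hmax.le_of_ge (y := {z : L | z ⊔ b ∈ F}) ⟨aux_colon hF b, hxb⟩ hsub hab)
  refine ⟨F, ⟨hF, fun h => hxF (h ▸ Set.mem_univ x), ?_⟩, hxF⟩
  intro a b hab
  by_contra! hcon
  have h1 := key a b hab hcon.1
  have h2 := key b x (by rwa [sup_comm]) hcon.2
  rw [sup_idem] at h2
  exact hxF h2

/-- `⋂ {O(P) : P ∈ Spec(L)} = {1}`. -/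
theorem sInter_O_primeFilters (L : Type*) [ResiduatedLattice L] :
    ⋂₀ {G : Set L | ∃ P : Set L, IsPrimeFilter P ∧ G = O P} = ({⊤} : Set L) := by
  ext x
  simp only [Set.mem_sInter, Set.mem_setOf_eq, Set.mem_singleton_iff]
  constructor
  · intro h
    by_contra hx
    obtain ⟨P, hP, hxP⟩ := aux_exists_prime x hx
    obtain ⟨a, ha, hax⟩ := h _ ⟨P, hP, rfl⟩
    obtain ⟨p, hp⟩ := hP.1.1
    have ht : a ⊔ x ∈ P := hax ▸ hP.1.2.1 p ⊤ hp le_top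
    exact (hP.2.2 a x ht).elim ha hxP
  · rintro rfl G ⟨P, hP, rfl⟩
    obtain ⟨a, ha⟩ := (Set.ne_univ_iff_exists_notMem P).1 hP.2.1
    exact ⟨a, ha, sup_top_eq a⟩

end ResiduatedLattice
end
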